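/- Let E be a complex Hilbert space, H a bounded self-adjoint operator on E, and ψ₀ ∈ E. For all real s and t, the pairs (H, ψ(t)) and (H, ψ(s)) are unitarily isomorphic in the sense of HSF′: there exists a unitary operator U on E (U† ∘ U = 1 and U ∘ U† = 1) with U ∘ H ∘ U† = H and U ψ(s) = ψ(t), where ψ(r) := exp((-r • Complex.I) • H) ψ₀. -/

import Mathlib

open NormedSpace ContinuousLinearMap

/-! The propagator `exp (-i(t - s)H)` is unitary because `-i(t - s)H` is skew-adjoint, it fixes `H`
under conjugation because it is a function of `H`, and it takes `ψ(s)` to `ψ(t)` by the group law.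
-/

section Propagator

/-- The propagator `exp (-ita)` generated by `a`, which carries a solution of the Schrödinger
equation `ψ' = -iaψ` from time `0` to time `t`. -/
noncomputable def propagator {A : Type*} [Ring A] [TopologicalSpace A] [IsTopologicalRing A]
    [Algebra ℂ A] (a : A) (t : ℝ) : A :=
  exp ((-t • Complex.I) • a)

lemma commute_propagator_self {A : Type*} [Ring A] [TopologicalSpace A] [IsTopologicalRing A]
    [T2Space A] [Algebra ℂ A] (a : A) (t : ℝ) : Commute (propagator a t) a :=
  ((Commute.refl a).smul_left _).exp_left

variable {A : Type*} [NormedRing A] [NormedAlgebra ℂ A] [CompleteSpace A]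

lemma propagator_add (a : A) (s t : ℝ) :
    propagator a (s + t) = propagator a s * propagator a t := by
  let +nondep : NormedAlgebra ℚ A := .restrictScalars ℚ ℂ A
  have hcomm : Commute ((-s • Complex.I) • a) ((-t • Complex.I) • a) :=
    ((Commute.refl a).smul_left _).smul_right _
  rw [propagator, neg_add, add_smul, add_smul, exp_add_of_commute hcomm, propagator, propagator]

lemma propagator_mem_unitary [StarRing A] [ContinuousStar A] [StarModule ℂ A] {a : A}
    (ha : IsSelfAdjoint a) (t : ℝ) : propagator a t ∈ unitary A := by
  let +nondep : NormedAlgebra ℚ A := .restrictScalars ℚ ℂ A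
  have hI : -t • Complex.I ∈ skewAdjoint ℂ :=
    skewAdjoint.smul_mem (-t) RCLike.I_mem_skewAdjoint
  exact exp_mem_unitary_of_mem_skewAdjoint (ha.smul_mem_skewAdjoint hI)

end Propagator

/-- Theorem 1 of the paper: for any two times `s` and `t`, the HSF′ triples `(ℋ, H, ψ(t))` and
`(ℋ, H, ψ(s))` are isomorphic — there is a unitary `U` with `U ∘ H ∘ U† = H` and
`U ψ(s) = ψ(t)`, where `ψ(r) = exp(-i r H) ψ₀`. -/
theorem hsf_triples_at_different_times_isomorphic {E : Type*} [NormedAddCommGroup E]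
    [InnerProductSpace ℂ E] [CompleteSpace E] (H : E →L[ℂ] E) (hH : IsSelfAdjoint H)
    (ψ₀ : E) (s t : ℝ) :
    ∃ U : E →L[ℂ] E, (adjoint U) ∘L U = 1 ∧ U ∘L (adjoint U) = 1 ∧
      U ∘L H ∘L (adjoint U) = H ∧
      U ((exp ((-s • Complex.I) • H)) ψ₀) = (exp ((-t • Complex.I) • H)) ψ₀ := by
  have hU : propagator H (t - s) ∈ unitary (E →L[ℂ] E) := propagator_mem_unitary hH (t - s)
  have hgroup : propagator H (t - s) * propagator H s = propagator H t := by
    rw [← propagator_add, sub_add_cancel]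
  exact ⟨propagator H (t - s), Unitary.star_mul_self_of_mem hU, Unitary.mul_star_self_of_mem hU,
    (commute_unitary_iff_star_right_conjugate hU).mp (commute_propagator_self H (t - s)),
    DFunLike.congr_fun hgroup ψ₀⟩
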